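/- arXiv:2407.13563 — 3 statements merged into one kernel-verified Lean document; each statement's English description precedes it below -/
import Mathlib

section
/- Let p, m be natural numbers and let A ∈ ℂ^{p×p}, B, C ∈ ℂ^{p×m}, D ∈ ℂ^{m×m} be constant matrices such that det(z·A + A^H) ≠ 0 in ℂ(z). Define H := (z·D + D^H) + (z·B^H + C^H)·(z·A + A^H)⁻¹·(z·C + B) ∈ ℂ(z)^{m×m} (the transfer function of the *-palindromic linear system matrix L(z) = z·[[−A, C],[B^H, D]] + [[−A^H, B],[C^H, D^H]]). Then z·H^*(z⁻¹) = H, i.e. for all i, j, multiplying by z the substitution of z⁻¹ into conj(H_{ji}) yields H_{ij}. -/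
open Polynomial Matrix

set_option synthInstance.maxHeartbeats 1000000
set_option maxHeartbeats 1000000

noncomputable section

/-- Coefficientwise complex conjugation on rational functions. -/
def conjRF : RatFunc ℂ →+* RatFunc ℂ :=
  RatFunc.mapRingHom (Polynomial.mapRingHom (starRingEnd ℂ))
    (by
      intro x hx
      simp only [Submonoid.mem_comap, mem_nonZeroDivisors_iff_ne_zero] at *
      intro h
      exact hx (Polynomial.map_injective _ (starRingEnd ℂ).injective (by simpa using h)))

/-- Substitution of `g` for the variable in `f`. -/
def subst (g f : RatFunc ℂ) : RatFunc ℂ := RatFunc.eval (algebraMap ℂ (RatFunc ℂ)) g f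

/-- Constant complex matrices regarded as matrices over `ℂ(z)`. -/
def toRF {n o : Type*} (A : Matrix n o ℂ) : Matrix n o (RatFunc ℂ) :=
  A.map (algebraMap ℂ (RatFunc ℂ))

/-- The para-conjugate `R^*(1/z)`. -/
def paraConj {n : Type*} (R : Matrix n n (RatFunc ℂ)) : Matrix n n (RatFunc ℂ) :=
  fun i j => subst (RatFunc.X)⁻¹ (conjRF (R j i))

def IsParaHermitian {n : Type*} (R : Matrix n n (RatFunc ℂ)) : Prop := paraConj R = R

def IsParaSkewHermitian {n : Type*} (R : Matrix n n (RatFunc ℂ)) : Prop := paraConj R = -R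

/-- The variable `z` of `ℂ(z)`. -/
def zz : RatFunc ℂ := RatFunc.X

theorem eval_inj : Function.Injective
    (Polynomial.eval₂RingHom (algebraMap ℂ (RatFunc ℂ)) (zz⁻¹)) := by
  have h : Transcendental ℂ (zz⁻¹) := by
    intro h
    have h2 := h.inv
    rw [inv_inv] at h2
    exact RatFunc.transcendental_X h2
  exact transcendental_iff_injective.mp h

open scoped nonZeroDivisors in
theorem eval_le : (ℂ[X])⁰ ≤ (RatFunc ℂ)⁰.comap
    (Polynomial.eval₂RingHom (algebraMap ℂ (RatFunc ℂ)) (zz⁻¹)) :=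
  nonZeroDivisors_le_comap_nonZeroDivisors_of_injective _ eval_inj

/-- para-conjugation as a ring homomorphism -/
def sig : RatFunc ℂ →+* RatFunc ℂ :=
  (RatFunc.liftRingHom _ eval_le).comp conjRF

theorem sig_apply (f : RatFunc ℂ) : sig f = subst zz⁻¹ (conjRF f) := by
  simp only [sig, RingHom.comp_apply, RatFunc.liftRingHom_apply, subst, RatFunc.eval,
    Polynomial.coe_eval₂RingHom]

theorem conj_poly (q : ℂ[X]) : conjRF (algebraMap _ _ q) =
    algebraMap _ _ (q.map (starRingEnd ℂ)) := by
  have := RatFunc.map_apply_div (Polynomial.mapRingHom (starRingEnd ℂ)) (by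
      intro x hx
      simp only [Submonoid.mem_comap, mem_nonZeroDivisors_iff_ne_zero] at *
      intro h
      exact hx (Polynomial.map_injective _ (starRingEnd ℂ).injective (by simpa using h))) q 1
  simpa [conjRF, RatFunc.coe_mapRingHom_eq_coe_map] using this

theorem sig_z : sig zz = zz⁻¹ := by
  have h : zz = algebraMap ℂ[X] (RatFunc ℂ) Polynomial.X := RatFunc.algebraMap_X.symm
  have h2 : sig (algebraMap ℂ[X] (RatFunc ℂ) Polynomial.X) = zz⁻¹ := by
    rw [sig, RingHom.comp_apply, conj_poly, RatFunc.liftRingHom_algebraMap]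
    simp
  rw [← h] at h2
  exact h2

theorem sig_C (c : ℂ) : sig (algebraMap ℂ (RatFunc ℂ) c) = algebraMap ℂ _ (starRingEnd ℂ c) := by
  have h : algebraMap ℂ (RatFunc ℂ) c = algebraMap ℂ[X] (RatFunc ℂ) (Polynomial.C c) := by
    rw [RatFunc.algebraMap_eq_C, RatFunc.algebraMap_C]
  rw [h, sig, RingHom.comp_apply, conj_poly, RatFunc.liftRingHom_algebraMap]
  simp

theorem zz_ne : zz ≠ 0 := RatFunc.X_ne_zero

theorem sig_pencil {n o : Type*} (P : Matrix n o ℂ) (Q : Matrix o n ℂ)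
    : ((zz • toRF P + toRF Qᴴ).map sig)ᵀ = zz⁻¹ • (zz • toRF Q + toRF Pᴴ) := by
  ext i j
  have := zz_ne
  simp [toRF, sig_z, sig_C, mul_add, this, -RatFunc.algebraMap_eq_C]
  ring

/-- the transfer function `H` of a `*`-palindromic linear system matrix
satisfies `z · H^*(1/z) = H`. -/
theorem palindromic_transfer_rev_one (p m : ℕ)
    (A : Matrix (Fin p) (Fin p) ℂ) (B C : Matrix (Fin p) (Fin m) ℂ)
    (D : Matrix (Fin m) (Fin m) ℂ)
    (hdet : (zz • toRF A + toRF Aᴴ).det ≠ 0)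
    (H : Matrix (Fin m) (Fin m) (RatFunc ℂ))
    (hH : H = (zz • toRF D + toRF Dᴴ) +
      (zz • toRF Bᴴ + toRF Cᴴ) * (zz • toRF A + toRF Aᴴ)⁻¹ *
      (zz • toRF C + toRF B)) :
    ∀ i j, zz * subst zz⁻¹ (conjRF (H j i)) = H i j := by
  intro i j
  have hz := zz_ne
  set M := zz • toRF A + toRF Aᴴ with hM
  have hMu : IsUnit M.det := isUnit_iff_ne_zero.mpr hdet
  have hMs : (M.map sig)ᵀ = zz⁻¹ • M := sig_pencil A A
  have hMi : (M⁻¹.map sig)ᵀ = zz • M⁻¹ := by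
    have h1 : (M.map sig)ᵀ * (M⁻¹.map sig)ᵀ = 1 := by
      rw [← Matrix.transpose_mul, ← Matrix.map_mul, Matrix.nonsing_inv_mul _ hMu]
      simp
    rw [hMs] at h1
    calc (M⁻¹.map sig)ᵀ = (zz • M⁻¹) * ((zz⁻¹ • M) * (M⁻¹.map sig)ᵀ) := by
          rw [← Matrix.mul_assoc, Matrix.smul_mul, Matrix.mul_smul, smul_smul,
            mul_inv_cancel₀ hz, one_smul, Matrix.nonsing_inv_mul _ hMu, Matrix.one_mul]
      _ = _ := by rw [h1, Matrix.mul_one]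
  have hB := sig_pencil Bᴴ C
  have hC := sig_pencil C Bᴴ
  rw [Matrix.conjTranspose_conjTranspose] at hB hC
  have key : zz • (H.map sig)ᵀ = H := by
    rw [hH, Matrix.map_add _ (map_add sig), Matrix.map_mul, Matrix.map_mul,
      Matrix.transpose_add, Matrix.transpose_mul, Matrix.transpose_mul, sig_pencil D D,
      hB, hC, hMi]
    generalize zz • toRF D + toRF Dᴴ = P
    generalize zz • toRF Bᴴ + toRF Cᴴ = Q
    generalize zz • toRF C + toRF B = R
    rw [smul_add]
    simp only [Matrix.smul_mul, Matrix.mul_smul, smul_smul, Matrix.mul_assoc]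
    simp [hz]
  rw [← sig_apply]
  exact congrFun (congrFun key i) j
end
end

section
/- Let R ∈ ℂ(z)^{m×m} be a nonzero para-Hermitian rational matrix. Then there do not exist a natural number p and constant matrices A ∈ ℂ^{p×p}, B, C ∈ ℂ^{p×m}, D ∈ ℂ^{m×m} with det(z·A + A^H) ≠ 0 in ℂ(z) such that R = (z·D + D^H) + (z·B^H + C^H)·(z·A + A^H)⁻¹·(z·C + B); that is, R is not the transfer function of any *-palindromic linear system matrix. -/
open Polynomial Matrix

set_option synthInstance.maxHeartbeats 1000000
set_option maxHeartbeats 1000000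

noncomputable section

theorem eval_inv_X_injective :
    Function.Injective
      (Polynomial.eval₂RingHom (algebraMap ℂ (RatFunc ℂ)) (RatFunc.X : RatFunc ℂ)⁻¹) := by
  have h1 : Transcendental ℂ (RatFunc.X : RatFunc ℂ)⁻¹ := by
    intro h
    exact RatFunc.transcendental_X (IsAlgebraic.inv_iff.mp h)
  exact transcendental_iff_injective.mp h1

def substHom : RatFunc ℂ →+* RatFunc ℂ :=
  RatFunc.liftRingHom
    (Polynomial.eval₂RingHom (algebraMap ℂ (RatFunc ℂ)) (RatFunc.X : RatFunc ℂ)⁻¹)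
    (nonZeroDivisors_le_comap_nonZeroDivisors_of_injective _ eval_inv_X_injective)

theorem substHom_apply (f : RatFunc ℂ) : substHom f = subst (RatFunc.X)⁻¹ f := by
  rw [substHom, RatFunc.liftRingHom_apply]
  rfl

def tau : RatFunc ℂ →+* RatFunc ℂ := substHom.comp conjRF

theorem conjRF_algebraMap (p : ℂ[X]) :
    conjRF (algebraMap ℂ[X] (RatFunc ℂ) p) =
      algebraMap ℂ[X] (RatFunc ℂ) (p.map (starRingEnd ℂ)) := by
  have h := RatFunc.map_apply_div (Polynomial.mapRingHom (starRingEnd ℂ))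
    (by
      intro x hx
      simp only [Submonoid.mem_comap, mem_nonZeroDivisors_iff_ne_zero] at *
      intro h
      exact hx (Polynomial.map_injective _ (starRingEnd ℂ).injective (by simpa using h))) p 1
  simp only [map_one, div_one] at h
  exact h

theorem tau_zz : tau zz = zz⁻¹ := by
  have h : conjRF zz = zz := by
    rw [zz, ← RatFunc.algebraMap_X, conjRF_algebraMap]; simp
  rw [tau, RingHom.comp_apply, h, substHom_apply, subst, zz, RatFunc.eval_X]

theorem tau_const (c : ℂ) :
    tau (algebraMap ℂ (RatFunc ℂ) c) = algebraMap ℂ (RatFunc ℂ) (star c) := by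
  rw [RatFunc.algebraMap_eq_C, tau, RingHom.comp_apply, ← RatFunc.algebraMap_C,
    conjRF_algebraMap, Polynomial.map_C, RatFunc.algebraMap_C, substHom_apply, subst,
    RatFunc.eval_C, RatFunc.algebraMap_eq_C]
  rfl

/-- Para-conjugate of a rectangular matrix. -/
def pc {n o : Type*} (M : Matrix n o (RatFunc ℂ)) : Matrix o n (RatFunc ℂ) := (M.map tau)ᵀ

theorem pc_mul {n o q : Type*} [Fintype o] (M : Matrix n o (RatFunc ℂ))
    (N : Matrix o q (RatFunc ℂ)) : pc (M * N) = pc N * pc M := by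
  rw [pc, Matrix.map_mul, Matrix.transpose_mul]; rfl

theorem pc_add {n o : Type*} (M N : Matrix n o (RatFunc ℂ)) :
    pc (M + N) = pc M + pc N := by
  ext i j
  simp [pc]

theorem pc_lin {n o : Type*} (A B : Matrix n o ℂ) :
    pc (zz • toRF A + toRF B) = zz⁻¹ • (zz • toRF Bᴴ + toRF Aᴴ) := by
  ext i j
  simp only [pc, toRF, Matrix.transpose_apply, Matrix.map_apply, Matrix.add_apply,
    Matrix.smul_apply, smul_eq_mul, map_add, map_mul, tau_zz, tau_const,
    Matrix.conjTranspose_apply]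
  have := zz_ne
  field_simp
  ring

theorem pc_one {n : Type*} [DecidableEq n] : pc (1 : Matrix n n (RatFunc ℂ)) = 1 := by
  rw [pc, Matrix.map_one _ (map_zero _) (map_one _), Matrix.transpose_one]

/-- a nonzero para-Hermitian rational matrix is not the transfer function of any
`*`-palindromic linear system matrix. -/
theorem paraHermitian_no_palindromic_system_matrix (m : ℕ)
    (R : Matrix (Fin m) (Fin m) (RatFunc ℂ)) (hR : R ≠ 0) (hpara : IsParaHermitian R) :
    ¬ ∃ (p : ℕ) (A : Matrix (Fin p) (Fin p) ℂ) (B C : Matrix (Fin p) (Fin m) ℂ)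
        (D : Matrix (Fin m) (Fin m) ℂ),
      (zz • toRF A + toRF Aᴴ).det ≠ 0 ∧
      R = (zz • toRF D + toRF Dᴴ) +
        (zz • toRF Bᴴ + toRF Cᴴ) * (zz • toRF A + toRF Aᴴ)⁻¹ * (zz • toRF C + toRF B) := by
  rintro ⟨p, A, B, C, D, hdet, h⟩
  have hz := zz_ne
  have hp : pc R = R := by
    rw [← hpara]
    conv_rhs => rw [← hpara]
    rw [hpara]
    ext i j
    simp only [pc, Matrix.transpose_apply, Matrix.map_apply, paraConj, tau, RingHom.comp_apply,
      substHom_apply]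
  have hM : pc (zz • toRF A + toRF Aᴴ) = zz⁻¹ • (zz • toRF A + toRF Aᴴ) := by
    rw [pc_lin, Matrix.conjTranspose_conjTranspose]
  have hD : pc (zz • toRF D + toRF Dᴴ) = zz⁻¹ • (zz • toRF D + toRF Dᴴ) := by
    rw [pc_lin, Matrix.conjTranspose_conjTranspose]
  have hB : pc (zz • toRF Bᴴ + toRF Cᴴ) = zz⁻¹ • (zz • toRF C + toRF B) := by
    rw [pc_lin, Matrix.conjTranspose_conjTranspose, Matrix.conjTranspose_conjTranspose]
  have hC : pc (zz • toRF C + toRF B) = zz⁻¹ • (zz • toRF Bᴴ + toRF Cᴴ) := pc_lin _ _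
  generalize zz • toRF A + toRF Aᴴ = M at *
  generalize zz • toRF D + toRF Dᴴ = E at *
  generalize zz • toRF Bᴴ + toRF Cᴴ = F at *
  generalize zz • toRF C + toRF B = G at *
  have hu : IsUnit M.det := isUnit_iff_ne_zero.mpr hdet
  have hN : pc M⁻¹ = zz • M⁻¹ := by
    have h1 : pc M⁻¹ * M = zz • 1 := by
      have h2 := congrArg pc (Matrix.mul_nonsing_inv M hu)
      rw [pc_mul, pc_one, hM, Matrix.mul_smul] at h2
      rw [← h2, smul_smul, mul_inv_cancel₀ hz, one_smul]
    calc pc M⁻¹ = pc M⁻¹ * M * M⁻¹ := by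
          rw [Matrix.mul_assoc, Matrix.mul_nonsing_inv M hu, Matrix.mul_one]
      _ = zz • M⁻¹ := by rw [h1, Matrix.smul_mul, Matrix.one_mul]
  have key : R = zz⁻¹ • R := by
    conv_lhs => rw [← hp, h]
    rw [pc_add, pc_mul, pc_mul, hD, hB, hC, hN, h]
    simp only [Matrix.smul_mul, Matrix.mul_smul, smul_smul, smul_add, Matrix.mul_assoc]
    congr 2
    field_simp
  apply hR
  ext i j
  have h3 : R i j = zz⁻¹ * R i j := congrFun (congrFun key i) j
  have h4 : (zz - 1) * R i j = 0 := by
    have h5 : zz * R i j = R i j := by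
      conv_lhs => rw [h3]
      rw [← mul_assoc, mul_inv_cancel₀ hz, one_mul]
    rw [sub_mul, h5, one_mul, sub_self]
  rcases mul_eq_zero.mp h4 with h6 | h6
  · exfalso
    have h7 : algebraMap ℂ[X] (RatFunc ℂ) Polynomial.X = algebraMap ℂ[X] (RatFunc ℂ) 1 := by
      rw [RatFunc.algebraMap_X, map_one]
      exact sub_eq_zero.mp h6
    have h8 := congrArg (Polynomial.eval 0) (RatFunc.algebraMap_injective ℂ h7)
    simp at h8
  · simpa using h6
end
end

section
/- Let R ∈ ℂ(z)^{m×m} and define G ∈ ℂ(z)^{m×m} entrywise by G_{ij} := the substitution of (I − z)/(I + z) into R_{ij}, where I is the imaginary unit Complex.I. Then R is para-Hermitian if and only if G is Hermitian, i.e. G^* = G (the coefficientwise-conjugate transpose of G equals G). -/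
open Polynomial Matrix

set_option synthInstance.maxHeartbeats 1000000
set_option maxHeartbeats 1000000

noncomputable section

/-- Coefficientwise-conjugate transpose of a matrix over `ℂ(z)`. -/
def conjT {a b : Type*} (R : Matrix a b (RatFunc ℂ)) : Matrix b a (RatFunc ℂ) :=
  fun i j => conjRF (R j i)

/-- Entrywise substitution of `g` into a matrix over `ℂ(z)`. -/
def substMat {a b : Type*} (g : RatFunc ℂ) (R : Matrix a b (RatFunc ℂ)) :
    Matrix a b (RatFunc ℂ) :=
  fun i j => subst g (R i j)

theorem subst_hom (g : RatFunc ℂ) (hg : ¬ ∃ c, g = RatFunc.C c) :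
    ∃ φ : RatFunc ℂ →+* RatFunc ℂ, (∀ f, φ f = subst g f) ∧
      (∀ c, φ (RatFunc.C c) = RatFunc.C c) ∧ φ RatFunc.X = g := by
  have ht : Transcendental ℂ g := RatFunc.transcendental_of_ne_C g hg
  have key : ∀ f, ((IntermediateField.val _).comp
      (RatFunc.algEquivOfTranscendental g ht).toAlgHom) f = subst g f := by
    intro f
    have := RatFunc.algEquivOfTranscendental_apply g ht f
    simpa [subst, RatFunc.eval, Polynomial.aeval_def] using this
  refine ⟨((IntermediateField.val _).comp
      (RatFunc.algEquivOfTranscendental g ht).toAlgHom : RatFunc ℂ →ₐ[ℂ] RatFunc ℂ).toRingHom,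
    key, fun c => (key _).trans ?_, (key _).trans ?_⟩
  · simp [subst]
  · simp [subst]

theorem ratFunc_hom_ext (f g : RatFunc ℂ →+* RatFunc ℂ)
    (hC : ∀ c, f (RatFunc.C c) = g (RatFunc.C c)) (hX : f RatFunc.X = g RatFunc.X) : f = g := by
  apply IsLocalization.ringHom_ext (nonZeroDivisors ℂ[X])
  apply Polynomial.ringHom_ext
  · intro c; simpa using hC c
  · simpa using hX

theorem conjRF_C (c : ℂ) : conjRF (RatFunc.C c) = RatFunc.C (starRingEnd ℂ c) := by
  rw [← RatFunc.algebraMap_C]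
  simp [conjRF, RatFunc.coe_mapRingHom_eq_coe_map, RatFunc.map_apply]

theorem conjRF_X : conjRF RatFunc.X = RatFunc.X := by
  simp [conjRF, RatFunc.coe_mapRingHom_eq_coe_map, RatFunc.map_apply]

theorem lin_eq_zero (a b : ℂ) (h : RatFunc.C a + RatFunc.C b * RatFunc.X = 0) :
    a = 0 ∧ b = 0 := by
  have h1 : algebraMap ℂ[X] (RatFunc ℂ) (Polynomial.C a + Polynomial.C b * Polynomial.X) = 0 := by
    simpa using h
  have h2 := (map_eq_zero_iff _ (RatFunc.algebraMap_injective ℂ)).1 h1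
  have h3 := congrArg (fun p => p.coeff 0) h2
  have h4 := congrArg (fun p => p.coeff 1) h2
  simp [Polynomial.coeff_C] at h3 h4
  exact ⟨h3, h4⟩

theorem Xinv_ne_C : ¬ ∃ c, (RatFunc.X : RatFunc ℂ)⁻¹ = RatFunc.C c := by
  rintro ⟨c, h⟩
  have := RatFunc.X_ne_zero (K := ℂ)
  field_simp at h
  have h' := lin_eq_zero (-1) c (by rw [map_neg, map_one]; linear_combination -h)
  simp at h'

theorem den_ne : RatFunc.C Complex.I + (RatFunc.X : RatFunc ℂ) ≠ 0 := fun h => by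
  have h' := lin_eq_zero Complex.I 1 (by rw [map_one]; linear_combination h)
  simp at h'

theorem num_ne : RatFunc.C Complex.I - (RatFunc.X : RatFunc ℂ) ≠ 0 := fun h => by
  have h' := lin_eq_zero Complex.I (-1) (by rw [map_neg, map_one]; linear_combination h)
  simp at h'

theorem mob_ne_C : ¬ ∃ c, (RatFunc.C Complex.I - RatFunc.X) / (RatFunc.C Complex.I + RatFunc.X)
    = RatFunc.C c := by
  rintro ⟨c, h⟩
  rw [div_eq_iff den_ne] at h
  have h' := lin_eq_zero (Complex.I - c * Complex.I) (-1 - c) (by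
    simp only [map_sub, map_mul, map_neg, map_one]; linear_combination h)
  have hc : c = -1 := by linear_combination -h'.2
  have h1 := h'.1
  rw [hc] at h1
  have h2 : 2 * Complex.I = 0 := by linear_combination h1
  simp at h2

theorem conj_mob : conjRF ((RatFunc.C Complex.I - RatFunc.X) / (RatFunc.C Complex.I + RatFunc.X))
    = ((RatFunc.C Complex.I - RatFunc.X) / (RatFunc.C Complex.I + RatFunc.X))⁻¹ := by
  rw [map_div₀, map_sub, map_add, conjRF_C, conjRF_X, inv_div, Complex.conj_I, map_neg]
  rw [show -RatFunc.C Complex.I - (RatFunc.X : RatFunc ℂ) = -(RatFunc.C Complex.I + RatFunc.X) by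
    ring, show -RatFunc.C Complex.I + (RatFunc.X : RatFunc ℂ) = -(RatFunc.C Complex.I - RatFunc.X)
    by ring, div_eq_div_iff (neg_ne_zero.2 num_ne) num_ne]
  ring

/-- `R` is para-Hermitian iff `G(x) := R((i-x)/(i+x))` is Hermitian. -/
theorem paraHermitian_iff_mobius_hermitian (m : ℕ)
    (R G : Matrix (Fin m) (Fin m) (RatFunc ℂ))
    (hG : G = substMat ((RatFunc.C Complex.I - zz) / (RatFunc.C Complex.I + zz)) R) :
    IsParaHermitian R ↔ conjT G = G := by
  obtain ⟨φ, hφ, hφC, hφX⟩ := subst_hom _ mob_ne_C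
  obtain ⟨ψ, hψ, hψC, hψX⟩ := subst_hom _ Xinv_ne_C
  have key : conjRF.comp φ = φ.comp (ψ.comp conjRF) := by
    apply ratFunc_hom_ext
    · intro c
      simp only [RingHom.comp_apply, hφC, hψC, conjRF_C]
    · simp only [RingHom.comp_apply, hφX, hψX, conjRF_X, map_inv₀, conj_mob]
  have hk : ∀ r, conjRF (φ r) = φ (ψ (conjRF r)) := fun r => RingHom.congr_fun key r
  subst hG
  unfold IsParaHermitian
  rw [← Matrix.ext_iff, ← Matrix.ext_iff]
  refine forall_congr' fun i => forall_congr' fun j => ?_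
  simp only [paraConj, conjT, substMat, zz, ← hφ, ← hψ, hk]
  exact φ.injective.eq_iff.symm
end
end
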